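/- Let M_1,…,M_m be n×n real matrices. If there exists no single permutation of {0,…,n−1} that is simultaneously an a-Monge permutation for all of M_1,…,M_m, then there exists a set B of indices with |B| ≤ 4 such that no permutation of B is simultaneously an a-Monge permutation for all of the principal submatrices M_1[B],…,M_m[B]. -/

import Mathlib

/-- A square matrix indexed by a linearly ordered type is a-Monge if
`M i k + M j l ≥ M i l + M j k` whenever `i < j` and `k < l`. -/
def AMonge {ι : Type*} [LinearOrder ι] (M : ι → ι → ℝ) : Prop :=
  ∀ i j k l : ι, i < j → k < l → M i l + M j k ≤ M i k + M j l

/-!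
Regard a matrix as a bilinear form, which assigns to two steps `a → b` and `c → d` the product
`M a c + M b d - M a d - M b c`; the matrix is a-Monge if any two forward steps have a nonnegative
product. If four points can be arranged well for all the matrices at once, then the products of two
given steps between them have the same weak sign in all the matrices and their transposes, so it is
enough to arrange the points well for the symmetric matrix `N` that is the sum of all of these.

For `N`, choose `x, y` maximizing the product of the step `x → y` with itself, and rank the points
`p` by the product of `x → y` with `x → p`. The maximality forces `x → y` to have, in every good
arrangement of a set containing `x` and `y`, the largest product with each forward step.
Comparing the good arrangements of four points with this ranking then shows that two consecutive
steps, and from there any two steps, that are forward for the ranking have a nonnegative product.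
-/

/-- The product of the steps `a → b` and `c → d` for the bilinear form with matrix `M`. -/
def crossDiff {α : Type*} (M : α → α → ℝ) (a b c d : α) : ℝ :=
  M a c + M b d - M a d - M b c

/-- The ranking `r` arranges the points of `B` so that the submatrix of `M` on `B` is a-Monge.
Points of equal rank count as ordered both ways, so that the ranking remains good however ties are
broken. -/
def IsMongeRank {α : Type*} (M : α → α → ℝ) (B : Set α) (r : α → ℝ) : Prop :=
  ∀ ⦃a⦄, a ∈ B → ∀ ⦃b⦄, b ∈ B → ∀ ⦃c⦄, c ∈ B → ∀ ⦃d⦄, d ∈ B →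
    r a ≤ r b → r c ≤ r d → 0 ≤ crossDiff M a b c d

/-- A symmetric matrix for which every set of at most four points has a Monge ranking. -/
structure IsFourPointMonge {α : Type*} (N : α → α → ℝ) : Prop where
  symm : ∀ a b, N a b = N b a
  exists_rank : ∀ p q s t, ∃ r, IsMongeRank N {p, q, s, t} r

/-- The step `x → y` has the largest product with itself, so that `x` and `y` are the natural
extreme points of a Monge ranking. -/
def IsDiameter {α : Type*} (N : α → α → ℝ) (x y : α) : Prop :=
  ∀ a b, crossDiff N a b a b ≤ crossDiff N x y x y

/-- The sum of a family of matrices and their transposes. -/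
def symmSum {ι α : Type*} [Fintype ι] (M : ι → α → α → ℝ) (a b : α) : ℝ :=
  ∑ i, (M i a b + M i b a)

section crossDiff

variable {α : Type*} {M : α → α → ℝ}

lemma crossDiff_swap_left (a b c d : α) : crossDiff M b a c d = -crossDiff M a b c d := by
  simp only [crossDiff]; ring

lemma crossDiff_swap_right (a b c d : α) : crossDiff M a b d c = -crossDiff M a b c d := by
  simp only [crossDiff]; ring

lemma crossDiff_reverse (a b c d : α) : crossDiff M b a d c = crossDiff M a b c d := by
  rw [crossDiff_swap_left, crossDiff_swap_right, neg_neg]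

lemma crossDiff_comm (hM : ∀ a b, M a b = M b a) (a b c d : α) :
    crossDiff M c d a b = crossDiff M a b c d := by
  simp only [crossDiff, hM c a, hM d b, hM c b, hM d a]; ring

lemma crossDiff_add_left (a b c d e : α) :
    crossDiff M a b d e + crossDiff M b c d e = crossDiff M a c d e := by
  simp only [crossDiff]; ring

lemma crossDiff_add_right (a b c d e : α) :
    crossDiff M a b c d + crossDiff M a b d e = crossDiff M a b c e := by
  simp only [crossDiff]; ring

lemma IsDiameter.symm {x y : α} (hxy : IsDiameter M x y) : IsDiameter M y x := fun a b => by
  rw [crossDiff_reverse x y]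
  exact hxy a b

lemma exists_isDiameter [Finite α] [Nonempty α] (M : α → α → ℝ) : ∃ x y, IsDiameter M x y := by
  obtain ⟨⟨x, y⟩, hxy⟩ := Finite.exists_max fun p : α × α => crossDiff M p.1 p.2 p.1 p.2
  exact ⟨x, y, fun a b => hxy (a, b)⟩

end crossDiff

lemma AMonge.crossDiff_nonneg {β : Type*} [LinearOrder β] {M : β → β → ℝ} (hM : AMonge M)
    {i j k l : β} (hij : i ≤ j) (hkl : k ≤ l) : 0 ≤ crossDiff M i j k l := by
  rcases hij.eq_or_lt with rfl | hij
  · simp [crossDiff]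
  rcases hkl.eq_or_lt with rfl | hkl
  · simp [crossDiff]
  have := hM i j k l hij hkl
  simp only [crossDiff]
  linarith

lemma AMonge.isMongeRank_range {α β : Type*} [LinearOrder β] {M : α → α → ℝ} {e : β → α}
    {r : α → ℝ} (hM : AMonge fun i j => M (e i) (e j)) (hr : StrictMono (r ∘ e)) :
    IsMongeRank M (Set.range e) r := by
  rintro _ ⟨i, rfl⟩ _ ⟨j, rfl⟩ _ ⟨k, rfl⟩ _ ⟨l, rfl⟩ hij hkl
  exact hM.crossDiff_nonneg (hr.le_iff_le.mp hij) (hr.le_iff_le.mp hkl)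

lemma exists_isMongeRank_of_perm {ι : Type*} {n : ℕ} {M : ι → Fin n → Fin n → ℝ}
    {B : Finset (Fin n)}
    (h : ∃ σ : Equiv.Perm ↥B, ∀ i, AMonge (fun a b : ↥B => M i (σ a).1 (σ b).1)) :
    ∃ r, ∀ i, IsMongeRank (M i) (B : Set (Fin n)) r := by
  obtain ⟨σ, hσ⟩ := h
  let e : ↥B → Fin n := fun b => (σ b).1
  have he : Function.Injective e := Subtype.val_injective.comp σ.injective
  have he_range : Set.range e = B := by
    rw [show e = Subtype.val ∘ σ from rfl, σ.surjective.range_comp, Subtype.range_coe]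
  let r : Fin n → ℝ := Function.extend e (fun b => (b.1 : ℝ)) 0
  have hr : StrictMono (r ∘ e) := by
    rw [Function.extend_comp he]
    exact fun a b hab => Nat.cast_lt.mpr hab
  exact ⟨r, fun i => he_range ▸ (hσ i).isMongeRank_range hr⟩

namespace IsMongeRank

variable {α : Type*} {M : α → α → ℝ} {B : Set α} {r : α → ℝ}

lemma aMonge_comp {β : Type*} [LinearOrder β] {e : β → α} (hr : IsMongeRank M Set.univ r)
    (he : Monotone (r ∘ e)) : AMonge fun i j => M (e i) (e j) := fun i j k l hij hkl => by
  have := hr (Set.mem_univ (e i)) (Set.mem_univ (e j)) (Set.mem_univ (e k)) (Set.mem_univ (e l))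
    (he hij.le) (he hkl.le)
  simp only [crossDiff] at this
  linarith

lemma neg (hr : IsMongeRank M B r) : IsMongeRank M B (-r) :=
  fun _ ha _ hb _ hc _ hd hab hcd => by
    rw [← crossDiff_reverse]
    exact hr hb ha hd hc (neg_le_neg_iff.mp hab) (neg_le_neg_iff.mp hcd)

lemma crossDiff_nonneg (hr : IsMongeRank M B r) {a b c d : α} (hab : r a ≤ r b) (hcd : r c ≤ r d)
    (ha : a ∈ B := by simp [*]) (hb : b ∈ B := by simp [*]) (hc : c ∈ B := by simp [*])
    (hd : d ∈ B := by simp [*]) : 0 ≤ crossDiff M a b c d :=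
  hr ha hb hc hd hab hcd

lemma crossDiff_nonpos (hr : IsMongeRank M B r) {a b c d : α} (hab : r a ≤ r b) (hdc : r d ≤ r c)
    (ha : a ∈ B := by simp [*]) (hb : b ∈ B := by simp [*]) (hc : c ∈ B := by simp [*])
    (hd : d ∈ B := by simp [*]) : crossDiff M a b c d ≤ 0 := by
  rw [← neg_nonneg, ← crossDiff_swap_right]
  exact hr ha hb hd hc hab hdc

lemma crossDiff_le_left (hr : IsMongeRank M B r) {a b a' b' c d : α} (ha'a : r a' ≤ r a)
    (hbb' : r b ≤ r b') (hcd : r c ≤ r d)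
    (ha : a ∈ B := by simp [*]) (hb : b ∈ B := by simp [*]) (ha' : a' ∈ B := by simp [*])
    (hb' : b' ∈ B := by simp [*]) (hc : c ∈ B := by simp [*]) (hd : d ∈ B := by simp [*]) :
    crossDiff M a b c d ≤ crossDiff M a' b' c d := by
  rw [← crossDiff_add_left a' a b', ← crossDiff_add_left a b b']
  linarith [hr.crossDiff_nonneg ha'a hcd, hr.crossDiff_nonneg hbb' hcd]

lemma crossDiff_le_right (hr : IsMongeRank M B r) {a b c d c' d' : α} (hab : r a ≤ r b)
    (hc'c : r c' ≤ r c) (hdd' : r d ≤ r d')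
    (ha : a ∈ B := by simp [*]) (hb : b ∈ B := by simp [*]) (hc : c ∈ B := by simp [*])
    (hd : d ∈ B := by simp [*]) (hc' : c' ∈ B := by simp [*]) (hd' : d' ∈ B := by simp [*]) :
    crossDiff M a b c d ≤ crossDiff M a b c' d' := by
  rw [← crossDiff_add_right a b c' c d', ← crossDiff_add_right a b c d d']
  linarith [hr.crossDiff_nonneg hab hc'c, hr.crossDiff_nonneg hab hdd']

lemma crossDiff_le_of_isDiameter (hr : IsMongeRank M B r) (hB : B.Finite) {x y : α}
    (hxy : IsDiameter M x y) (hle : r x ≤ r y) {p q s t : α} (hst : r s ≤ r t)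
    (hx : x ∈ B := by simp [*]) (hy : y ∈ B := by simp [*]) (hp : p ∈ B := by simp [*])
    (hq : q ∈ B := by simp [*]) (hs : s ∈ B := by simp [*]) (ht : t ∈ B := by simp [*]) :
    crossDiff M p q s t ≤ crossDiff M x y s t := by
  obtain ⟨lo, hlo, hmin⟩ := B.exists_min_image r hB ⟨x, hx⟩
  obtain ⟨hi, hhi, hmax⟩ := B.exists_max_image r hB ⟨x, hx⟩
  have hfull : crossDiff M lo hi lo hi ≤ crossDiff M x y lo hi :=
    calc crossDiff M lo hi lo hi
      _ ≤ crossDiff M x y x y := hxy lo hi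
      _ ≤ crossDiff M x y lo hi := hr.crossDiff_le_right hle (hmin x hx) (hmax y hy)
  have hlo_x : crossDiff M lo x s t ≤ crossDiff M lo x lo hi :=
    hr.crossDiff_le_right (hmin x hx) (hmin s hs) (hmax t ht)
  have hy_hi : crossDiff M y hi s t ≤ crossDiff M y hi lo hi :=
    hr.crossDiff_le_right (hmax y hy) (hmin s hs) (hmax t ht)
  have hsplit (c d : α) : crossDiff M lo hi c d =
      crossDiff M lo x c d + crossDiff M x y c d + crossDiff M y hi c d := by
    rw [crossDiff_add_left, crossDiff_add_left]
  calc crossDiff M p q s t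
    _ ≤ crossDiff M lo hi s t := hr.crossDiff_le_left (hmin p hp) (hmax q hq) hst
    _ ≤ crossDiff M x y s t := by linarith [hsplit s t, hsplit lo hi]

end IsMongeRank

namespace IsFourPointMonge

variable {α : Type*} {N : α → α → ℝ}

lemma exists_rank_le (hN : IsFourPointMonge N) (p q s t : α) :
    ∃ r, IsMongeRank N {p, q, s, t} r ∧ r p ≤ r q := by
  obtain ⟨r, hr⟩ := hN.exists_rank p q s t
  rcases le_total (r p) (r q) with hpq | hqp
  · exact ⟨r, hr, hpq⟩
  · exact ⟨-r, hr.neg, neg_le_neg hqp⟩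

lemma crossDiff_self_nonneg (hN : IsFourPointMonge N) (a b : α) : 0 ≤ crossDiff N a b a b := by
  obtain ⟨r, hr, hab⟩ := hN.exists_rank_le a b a b
  exact hr.crossDiff_nonneg hab hab

lemma crossDiff_from_diameter_nonneg (hN : IsFourPointMonge N) {x y c d : α}
    (hxy : IsDiameter N x y) (hcd : 0 ≤ crossDiff N x y c d) : 0 ≤ crossDiff N x c c d := by
  obtain ⟨r, hr, hle⟩ := hN.exists_rank_le x y c d
  rcases le_total (r c) (r d) with hrcd | hrdc
  · have hcy_le : crossDiff N c y c d ≤ crossDiff N x y c d :=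
      hr.crossDiff_le_of_isDiameter (Set.toFinite _) hxy hle hrcd
    linarith [crossDiff_add_left (M := N) x c y c d]
  · have hxc_le : crossDiff N x c d c ≤ crossDiff N x y d c :=
      hr.crossDiff_le_of_isDiameter (Set.toFinite _) hxy hle hrdc
    rw [crossDiff_swap_right, crossDiff_swap_right x y, neg_le_neg_iff] at hxc_le
    exact hcd.trans hxc_le

lemma crossDiff_consecutive_nonneg_of_self_pos (hN : IsFourPointMonge N) {x c d e : α}
    (hcd : 0 ≤ crossDiff N x c c d) (hde : 0 ≤ crossDiff N x d d e)
    (hpos : 0 < crossDiff N c d c d) : 0 ≤ crossDiff N c d d e := by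
  obtain ⟨r, hr, hrxd⟩ := hN.exists_rank_le x d c e
  have hxd_pos : 0 < crossDiff N x d c d := by
    rw [← crossDiff_add_left x c d]
    exact add_pos_of_nonneg_of_pos hcd hpos
  have hrcd : r c ≤ r d := by
    by_contra! hdc
    exact hxd_pos.not_ge (hr.crossDiff_nonpos hrxd hdc.le)
  rcases le_total (r d) (r e) with hrde | hred
  · exact hr.crossDiff_nonneg hrcd hrde
  rw [crossDiff_swap_right, neg_nonneg] at hde ⊢
  rcases le_total (r e) (r c) with hrec | hrce
  · have hce_le : crossDiff N x d c d ≤ crossDiff N x d e d :=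
      hr.crossDiff_le_right hrxd hrec le_rfl
    exact absurd (hxd_pos.trans_le hce_le) hde.not_gt
  rcases le_total (r x) (r c) with hrxc | hrcx
  · exact (hr.crossDiff_le_left hrxc le_rfl hred).trans hde
  · have hcx_le : crossDiff N c x e d ≤ crossDiff N c x c d :=
      hr.crossDiff_le_right hrcx hrce le_rfl
    rw [crossDiff_swap_left x c c d] at hcx_le
    linarith [crossDiff_add_left (M := N) c x d e d]

lemma crossDiff_consecutive_nonneg (hN : IsFourPointMonge N) {x y c d e : α}
    (hxy : IsDiameter N x y) (hcd : 0 ≤ crossDiff N x y c d) (hde : 0 ≤ crossDiff N x y d e) :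
    0 ≤ crossDiff N c d d e := by
  rcases (hN.crossDiff_self_nonneg c d).lt_or_eq with hcd_pos | hcd_zero
  · exact hN.crossDiff_consecutive_nonneg_of_self_pos (hN.crossDiff_from_diameter_nonneg hxy hcd)
      (hN.crossDiff_from_diameter_nonneg hxy hde) hcd_pos
  rcases (hN.crossDiff_self_nonneg e d).lt_or_eq with hed_pos | hed_zero
  · -- Seen from `y`, the steps `e → d` and `d → c` are the consecutive forward steps.
    rw [← crossDiff_reverse] at hcd hde
    rw [← crossDiff_reverse, crossDiff_comm hN.symm]
    exact hN.crossDiff_consecutive_nonneg_of_self_pos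
      (hN.crossDiff_from_diameter_nonneg hxy.symm hde)
      (hN.crossDiff_from_diameter_nonneg hxy.symm hcd) hed_pos
  have hsq : crossDiff N c e c e =
      crossDiff N c d c d + crossDiff N e d e d + 2 * crossDiff N c d d e := by
    rw [← crossDiff_add_left c d e, ← crossDiff_add_right c d c d e,
      ← crossDiff_add_right d e c d e, crossDiff_comm hN.symm c d d e, crossDiff_reverse d e d e]
    ring
  linarith [hN.crossDiff_self_nonneg c e]

lemma crossDiff_separated_nonneg (hN : IsFourPointMonge N) {x y c d e f : α}
    (hxy : IsDiameter N x y) (hcd : 0 ≤ crossDiff N x y c d)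
    (hde : 0 ≤ crossDiff N x y d e) (hef : 0 ≤ crossDiff N x y e f) : 0 ≤ crossDiff N c d e f := by
  obtain ⟨r, hr, hrcd⟩ := hN.exists_rank_le c d e f
  have hdf : 0 ≤ crossDiff N c d d f :=
    hN.crossDiff_consecutive_nonneg hxy hcd (crossDiff_add_right x y d e f ▸ add_nonneg hde hef)
  have hce : 0 ≤ crossDiff N c e e f :=
    hN.crossDiff_consecutive_nonneg hxy (crossDiff_add_right x y c d e ▸ add_nonneg hcd hde) hef
  rcases le_total (r e) (r f) with href | hrfe
  · exact hr.crossDiff_nonneg hrcd href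
  rcases le_total (r d) (r e) with hrde | hred
  · linarith [crossDiff_add_left (M := N) c d e e f, hr.crossDiff_nonpos hrde hrfe]
  · linarith [crossDiff_add_right (M := N) c d d e f, hr.crossDiff_nonpos hrcd hred]

lemma crossDiff_same_start_nonneg (hN : IsFourPointMonge N) {x y a b d : α}
    (hxy : IsDiameter N x y) (hab : 0 ≤ crossDiff N x y a b) (had : 0 ≤ crossDiff N x y a d) :
    0 ≤ crossDiff N a b a d := by
  wlog hbd : 0 ≤ crossDiff N x y b d generalizing b d
  · rw [← crossDiff_comm hN.symm]
    refine this had hab ?_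
    rw [crossDiff_swap_right]
    exact neg_nonneg.mpr (not_le.mp hbd).le
  rw [← crossDiff_add_right a b a b d]
  exact add_nonneg (hN.crossDiff_self_nonneg a b) (hN.crossDiff_consecutive_nonneg hxy hab hbd)

lemma crossDiff_nonneg (hN : IsFourPointMonge N) {x y a b c d : α} (hxy : IsDiameter N x y)
    (hab : 0 ≤ crossDiff N x y a b) (hcd : 0 ≤ crossDiff N x y c d) :
    0 ≤ crossDiff N a b c d := by
  have total (p q : α) : 0 ≤ crossDiff N x y p q ∨ 0 ≤ crossDiff N x y q p := by
    rw [crossDiff_swap_right x y p q, neg_nonneg]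
    exact le_total 0 _
  wlog hac : 0 ≤ crossDiff N x y a c generalizing a b c d
  · rw [← crossDiff_comm hN.symm]
    exact this hcd hab ((total a c).resolve_left hac)
  rcases total b c with hbc | hcb
  · exact hN.crossDiff_separated_nonneg hxy hab hbc hcd
  · rw [← crossDiff_add_left a c b]
    exact add_nonneg (hN.crossDiff_consecutive_nonneg hxy hac hcd)
      (hN.crossDiff_same_start_nonneg hxy hcb hcd)

theorem exists_isMongeRank_univ [Finite α] (hN : IsFourPointMonge N) :
    ∃ r, IsMongeRank N Set.univ r := by
  rcases isEmpty_or_nonempty α with hα | hα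
  · exact ⟨0, fun a => isEmptyElim a⟩
  obtain ⟨x, y, hxy⟩ := exists_isDiameter N
  have step_nonneg {a b : α} (hab : crossDiff N x y x a ≤ crossDiff N x y x b) :
      0 ≤ crossDiff N x y a b := by
    linarith [crossDiff_add_right (M := N) x y x a b]
  exact ⟨crossDiff N x y x, fun a _ b _ c _ d _ hab hcd =>
    hN.crossDiff_nonneg hxy (step_nonneg hab) (step_nonneg hcd)⟩

end IsFourPointMonge

section Family

variable {ι α : Type*} {M : ι → α → α → ℝ}

lemma symmSum_comm [Fintype ι] (a b : α) : symmSum M a b = symmSum M b a :=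
  Finset.sum_congr rfl fun _ _ => add_comm _ _

lemma crossDiff_symmSum [Fintype ι] (a b c d : α) :
    crossDiff (symmSum M) a b c d =
      ∑ i, (crossDiff (M i) a b c d + crossDiff (M i) c d a b) := by
  simp only [crossDiff, symmSum, ← Finset.sum_add_distrib, ← Finset.sum_sub_distrib]
  exact Finset.sum_congr rfl fun i _ => by ring

lemma isMongeRank_symmSum [Fintype ι] {B : Set α} {r : α → ℝ} (hr : ∀ i, IsMongeRank (M i) B r) :
    IsMongeRank (symmSum M) B r := fun a ha b hb c hc d hd hab hcd => by
  rw [crossDiff_symmSum]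
  exact Finset.sum_nonneg fun i _ =>
    add_nonneg (hr i ha hb hc hd hab hcd) (hr i hc hd ha hb hcd hab)

lemma isFourPointMonge_symmSum [Fintype ι]
    (hM : ∀ p q s t, ∃ r, ∀ i, IsMongeRank (M i) {p, q, s, t} r) :
    IsFourPointMonge (symmSum M) where
  symm := symmSum_comm
  exists_rank p q s t := (hM p q s t).imp fun _ => isMongeRank_symmSum

lemma crossDiff_nonneg_of_symmSum_nonneg [Fintype ι] {a b c d : α} {r : α → ℝ}
    (hr : ∀ i, IsMongeRank (M i) {a, b, c, d} r)
    (hsum : 0 ≤ crossDiff (symmSum M) a b c d) (i : ι) : 0 ≤ crossDiff (M i) a b c d := by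
  wlog hab : r a ≤ r b generalizing r
  · exact this (fun j => (hr j).neg) (neg_le_neg (not_le.mp hab).le)
  rcases le_total (r c) (r d) with hcd | hdc
  · exact (hr i).crossDiff_nonneg hab hcd
  have hnonpos (j : ι) : crossDiff (M j) a b c d ≤ 0 := (hr j).crossDiff_nonpos hab hdc
  have hnonpos_comm (j : ι) : crossDiff (M j) c d a b ≤ 0 := by
    rw [← crossDiff_reverse]
    exact (hr j).crossDiff_nonpos hdc hab
  have hterm (j : ι) : crossDiff (M j) a b c d + crossDiff (M j) c d a b ≤ 0 :=
    add_nonpos (hnonpos j) (hnonpos_comm j)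
  rw [crossDiff_symmSum] at hsum
  have hzero := (Finset.sum_eq_zero_iff_of_nonpos fun j _ => hterm j).mp
    (le_antisymm (Finset.sum_nonpos fun j _ => hterm j) hsum) i (Finset.mem_univ i)
  linarith [hnonpos_comm i]

theorem exists_common_isMongeRank_univ [Finite ι] [Finite α]
    (hM : ∀ p q s t, ∃ r, ∀ i, IsMongeRank (M i) {p, q, s, t} r) :
    ∃ r, ∀ i, IsMongeRank (M i) Set.univ r := by
  cases nonempty_fintype ι
  obtain ⟨r, hr⟩ := (isFourPointMonge_symmSum hM).exists_isMongeRank_univ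
  refine ⟨r, fun i a ha b hb c hc d hd hab hcd => ?_⟩
  obtain ⟨s, hs⟩ := hM a b c d
  exact crossDiff_nonneg_of_symmSum_nonneg hs (hr ha hb hc hd hab hcd) i

end Family

/-- If no single permutation of `{0,…,n−1}` is simultaneously an
a-Monge permutation for all the matrices `M₁,…,Mₘ`, then there is a set `B` of at
most `4` indices such that no permutation of `B` is simultaneously an a-Monge
permutation for all the principal submatrices `M₁[B],…,Mₘ[B]`. -/
theorem no_common_aMonge_perm_small_submatrices
    {m n : ℕ} (M : Fin m → Fin n → Fin n → ℝ)
    (h : ¬ ∃ π : Equiv.Perm (Fin n),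
          ∀ i : Fin m, AMonge (fun a b => M i (π a) (π b))) :
    ∃ B : Finset (Fin n), B.card ≤ 4 ∧
      ¬ ∃ σ : Equiv.Perm ↥B,
          ∀ i : Fin m, AMonge (fun a b : ↥B => M i (σ a).1 (σ b).1) := by
  by_contra! hB
  have hfour (p q s t : Fin n) : ∃ r, ∀ i, IsMongeRank (M i) {p, q, s, t} r := by
    simpa using exists_isMongeRank_of_perm (hB {p, q, s, t} Finset.card_le_four)
  obtain ⟨r, hr⟩ := exists_common_isMongeRank_univ hfour
  exact h ⟨Tuple.sort r, fun i => (hr i).aMonge_comp (Tuple.monotone_sort r)⟩
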